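/- Fourth-order two-body error term (paper eq. A17b): for i ≠ j and any phase-space point (x,p) with r_ij ≠ 0, the left-nested canonical Poisson bracket satisfies {{{{V_ij, T}, T}, T}, V_ij}(x,p) = −9 (G² (m i)(m j)((m i)+(m j)) / r_ij⁸) · ( 3 (v_ij · x_ij)² − r_ij² ‖v_ij‖² ). -/

import Mathlib

open scoped RealInnerProductSpace BigOperators

noncomputable section

/-- Three-dimensional Euclidean space. -/
abbrev E3 : Type := EuclideanSpace ℝ (Fin 3)

/-- Phase space for `N` particles: positions and momenta. -/
abbrev Phase (N : ℕ) : Type := (Fin N → E3) × (Fin N → E3)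

/-- Gradient of a phase-space function with respect to the `k`-th position. -/
def gradPos {N : ℕ} (A : Phase N → ℝ) (k : Fin N) (w : Phase N) : E3 :=
  gradient (fun y => A (Function.update w.1 k y, w.2)) (w.1 k)

/-- Gradient of a phase-space function with respect to the `k`-th momentum. -/
def gradMom {N : ℕ} (A : Phase N → ℝ) (k : Fin N) (w : Phase N) : E3 :=
  gradient (fun y => A (w.1, Function.update w.2 k y)) (w.2 k)

/-- Canonical Poisson bracket of two phase-space functions. -/
def poisson {N : ℕ} (A B : Phase N → ℝ) (w : Phase N) : ℝ :=
  ∑ k, (⟪gradPos A k w, gradMom B k w⟫ - ⟪gradMom A k w, gradPos B k w⟫)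

/-- Kinetic energy `T = Σ_i ‖p_i‖²/(2 m_i)`. -/
def kinetic {N : ℕ} (m : Fin N → ℝ) (w : Phase N) : ℝ :=
  ∑ i, ‖w.2 i‖ ^ 2 / (2 * m i)

/-- Pair potential `V_ij = −G m_i m_j / ‖x_i − x_j‖`. -/
def pairPot {N : ℕ} (G : ℝ) (m : Fin N → ℝ) (i j : Fin N) (w : Phase N) : ℝ :=
  -(G * m i * m j) / ‖w.1 i - w.1 j‖

/-!
Off collisions, `V` and all its brackets with `T` depend on `w` only through the separation
`x = x_i - x_j` and the relative velocity `v`. On such functions `F x v`, bracketing with `T`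
differentiates along free flight, `F ↦ ⟪∇ₓ F, v⟫`, and bracketing with a function `U x` gives
`-(1/m_i + 1/m_j) ⟪∇ᵥ F, ∇ U⟫`. Three free-flight derivatives of `-κ/‖x‖` followed by one bracket
of the second kind give the formula.
-/

section GradientCalculus

variable {E : Type*} [NormedAddCommGroup E] [InnerProductSpace ℝ E] [CompleteSpace E]
  {f g : E → ℝ} {f' g' x : E}

theorem hasGradientAt_sub (hf : HasGradientAt f f' x) (hg : HasGradientAt g g' x) :
    HasGradientAt (fun y => f y - g y) (f' - g') x := by
  rw [hasGradientAt_iff_hasFDerivAt, map_sub]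
  exact hf.hasFDerivAt.sub hg.hasFDerivAt

theorem hasGradientAt_mul (hf : HasGradientAt f f' x) (hg : HasGradientAt g g' x) :
    HasGradientAt (fun y => f y * g y) (f x • g' + g x • f') x := by
  rw [hasGradientAt_iff_hasFDerivAt]
  simpa only [map_add, map_smul] using hf.hasFDerivAt.fun_mul hg.hasFDerivAt

theorem hasGradientAt_const_mul (c : ℝ) (hf : HasGradientAt f f' x) :
    HasGradientAt (fun y => c * f y) (c • f') x := by
  simpa using hasGradientAt_mul (hasGradientAt_const x c) hf

theorem hasGradientAt_const_add (c : ℝ) (hf : HasGradientAt f f' x) :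
    HasGradientAt (fun y => c + f y) f' x :=
  hasGradientAt_iff_hasFDerivAt.mpr (hf.hasFDerivAt.const_add c)

theorem hasDerivAt_comp_hasGradientAt {φ : ℝ → ℝ} {φ' : ℝ} (hφ : HasDerivAt φ φ' (f x))
    (hf : HasGradientAt f f' x) : HasGradientAt (fun y => φ (f y)) (φ' • f') x := by
  rw [hasGradientAt_iff_hasFDerivAt, map_smul]
  exact hφ.comp_hasFDerivAt x hf.hasFDerivAt

theorem hasGradientAt_pow (n : ℕ) (hf : HasGradientAt f f' x) :
    HasGradientAt (fun y => f y ^ n) ((n * f x ^ (n - 1)) • f') x :=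
  hasDerivAt_comp_hasGradientAt (hasDerivAt_pow n (f x)) hf

theorem hasGradientAt_comp_add_smul_sub {b : E} (c : ℝ) (hf : HasGradientAt f f' b) (x : E) :
    HasGradientAt (fun y => f (b + c • (y - x))) (c • f') x := by
  have affine :
      HasFDerivAt (fun y : E => b + c • (y - x)) (c • ContinuousLinearMap.id ℝ E) x :=
    (((hasFDerivAt_id x).sub_const x).const_smul c).const_add b
  have outer : HasFDerivAt f (InnerProductSpace.toDual ℝ E f') (b + c • (x - x)) := by
    simpa using hf.hasFDerivAt
  rw [hasGradientAt_iff_hasFDerivAt]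
  refine (outer.comp x affine).congr_fderiv ?_
  ext y
  simp

theorem hasGradientAt_inner_right (v x : E) : HasGradientAt (fun y => ⟪v, y⟫) v x :=
  (InnerProductSpace.toDual ℝ E v).hasFDerivAt

theorem hasGradientAt_inner_left (v x : E) : HasGradientAt (fun y => ⟪y, v⟫) v x := by
  simpa only [real_inner_comm v] using hasGradientAt_inner_right v x

theorem hasGradientAt_norm_sq (x : E) : HasGradientAt (fun y => ‖y‖ ^ 2) ((2 : ℝ) • x) x := by
  rw [hasGradientAt_iff_hasFDerivAt]
  refine (hasStrictFDerivAt_norm_sq x).hasFDerivAt.congr_fderiv ?_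
  ext y
  simp

theorem hasGradientAt_norm (hx : x ≠ 0) : HasGradientAt (fun y => ‖y‖) (‖x‖⁻¹ • x) x := by
  have hsqrt := Real.hasDerivAt_sqrt (pow_ne_zero 2 (norm_ne_zero_iff.mpr hx))
  convert hasDerivAt_comp_hasGradientAt (f := (‖·‖ ^ 2)) hsqrt (hasGradientAt_norm_sq x) using 1
  · simp
  · rw [smul_smul, Real.sqrt_sq (norm_nonneg x)]
    congr 1
    field

theorem hasGradientAt_norm_zpow (n : ℤ) (hx : x ≠ 0) :
    HasGradientAt (fun y => ‖y‖ ^ n) ((n * ‖x‖ ^ (n - 2)) • x) x := by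
  have hnorm : ‖x‖ ≠ 0 := norm_ne_zero_iff.mpr hx
  convert hasDerivAt_comp_hasGradientAt (hasDerivAt_zpow n ‖x‖ (.inl hnorm))
    (hasGradientAt_norm hx) using 1
  rw [smul_smul, mul_assoc, ← zpow_neg_one, ← zpow_add₀ hnorm]
  ring_nf

end GradientCalculus

section PairSign

variable {ι : Type*} [DecidableEq ι]

/-- The coefficient of `x_k` in `x_i - x_j`. -/
def pairSign (i j k : ι) : ℝ :=
  (Pi.single i 1 : ι → ℝ) k - (Pi.single j 1 : ι → ℝ) k

theorem sum_pairSign_mul [Fintype ι] (i j : ι) (f : ι → ℝ) :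
    ∑ k, pairSign i j k * f k = f i - f j := by
  simp [pairSign, sub_mul, Pi.single_apply]

theorem update_sub_update {E : Type*} [AddCommGroup E] [Module ℝ E] (i j k : ι) (x : ι → E)
    (y : E) :
    Function.update x k y i - Function.update x k y j =
      x i - x j + pairSign i j k • (y - x k) := by
  have update_apply_eq (l : ι) : Function.update x k y l =
      x l + (Pi.single l 1 : ι → ℝ) k • (y - x k) := by
    obtain rfl | hl := eq_or_ne l k
    · simp
    · simp [hl, hl.symm]
  rw [update_apply_eq i, update_apply_eq j, pairSign]
  module

end PairSign

section PairFunction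

variable {N : ℕ} {m : Fin N → ℝ} {i j : Fin N} {A B : Phase N → ℝ} {F F' : E3 → E3 → ℝ}
  {w : Phase N}

/-- The separation `x_ij` of the particles `i` and `j`. -/
def separation (i j : Fin N) (w : Phase N) : E3 :=
  w.1 i - w.1 j

/-- The relative velocity `v_ij` of the particles `i` and `j`, whose velocities are `p / m`. -/
def relVelocity (m : Fin N → ℝ) (i j : Fin N) (w : Phase N) : E3 :=
  (m i)⁻¹ • w.2 i - (m j)⁻¹ • w.2 j

/-- Away from collisions of `i` and `j`, the phase-space function `A` is the function `F` of the
separation and the relative velocity of these two particles. -/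
def IsPairFunction (m : Fin N → ℝ) (i j : Fin N) (A : Phase N → ℝ) (F : E3 → E3 → ℝ) : Prop :=
  ∀ w, separation i j w ≠ 0 → A w = F (separation i j w) (relVelocity m i j w)

theorem separation_update (i j k : Fin N) (w : Phase N) (y : E3) :
    separation i j (Function.update w.1 k y, w.2) =
      separation i j w + pairSign i j k • (y - w.1 k) :=
  update_sub_update i j k w.1 y

theorem relVelocity_update (m : Fin N → ℝ) (i j k : Fin N) (w : Phase N) (y : E3) :
    relVelocity m i j (w.1, Function.update w.2 k y) =
      relVelocity m i j w + (pairSign i j k * (m k)⁻¹) • (y - w.2 k) := by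
  have smul_update (l : Fin N) : (m l)⁻¹ • Function.update w.2 k y l =
      Function.update (fun l => (m l)⁻¹ • w.2 l) k ((m k)⁻¹ • y) l :=
    Function.apply_update (fun l => ((m l)⁻¹ • · : E3 → E3)) w.2 k y l
  simp only [relVelocity, smul_update, update_sub_update, ← smul_sub, smul_smul]

theorem gradPos_kinetic (m : Fin N → ℝ) (k : Fin N) (w : Phase N) :
    gradPos (kinetic m) k w = 0 :=
  gradient_fun_const (w.1 k) (kinetic m w)

theorem kinetic_update (m : Fin N → ℝ) (k : Fin N) (w : Phase N) (y : E3) :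
    kinetic m (w.1, Function.update w.2 k y) =
      (kinetic m w - (2 * m k)⁻¹ * ‖w.2 k‖ ^ 2) + (2 * m k)⁻¹ * ‖y‖ ^ 2 := by
  have other_particles : ∑ l ∈ Finset.univ.erase k, ‖Function.update w.2 k y l‖ ^ 2 / (2 * m l) =
      ∑ l ∈ Finset.univ.erase k, ‖w.2 l‖ ^ 2 / (2 * m l) :=
    Finset.sum_congr rfl fun l hl => by rw [Function.update_of_ne (Finset.ne_of_mem_erase hl)]
  simp only [kinetic, ← Finset.add_sum_erase _ _ (Finset.mem_univ k), other_particles,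
    Function.update_self]
  ring

theorem gradMom_kinetic (m : Fin N → ℝ) (k : Fin N) (w : Phase N) :
    gradMom (kinetic m) k w = (m k)⁻¹ • w.2 k := by
  simp only [gradMom, kinetic_update]
  convert (hasGradientAt_const_add _ (hasGradientAt_const_mul (2 * m k)⁻¹
    (hasGradientAt_norm_sq (w.2 k)))).gradient using 1
  rw [smul_smul, mul_inv_rev, inv_mul_cancel_right₀ two_ne_zero]

theorem IsPairFunction.gradPos_eq (hA : IsPairFunction m i j A F) (hw : separation i j w ≠ 0)
    {gradF : E3} (hF : HasGradientAt (F · (relVelocity m i j w)) gradF (separation i j w))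
    (k : Fin N) :
    gradPos A k w = pairSign i j k • gradF := by
  have noncollision : ∀ᶠ y in nhds (w.1 k),
      separation i j w + pairSign i j k • (y - w.1 k) ≠ 0 := by
    have : ContinuousAt (fun y => separation i j w + pairSign i j k • (y - w.1 k)) (w.1 k) := by
      fun_prop
    exact this.eventually_ne (by simpa using hw)
  refine ((hasGradientAt_comp_add_smul_sub (pairSign i j k) hF (w.1 k)).congr_of_eventuallyEq
    ?_).gradient
  filter_upwards [noncollision] with y hy
  rw [← separation_update] at hy ⊢
  exact hA _ hy

theorem IsPairFunction.gradMom_eq (hA : IsPairFunction m i j A F) (hw : separation i j w ≠ 0)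
    {gradF : E3} (hF : HasGradientAt (F (separation i j w)) gradF (relVelocity m i j w))
    (k : Fin N) :
    gradMom A k w = (pairSign i j k * (m k)⁻¹) • gradF := by
  refine ((hasGradientAt_comp_add_smul_sub (pairSign i j k * (m k)⁻¹) hF
    (w.2 k)).congr_of_eventuallyEq (.of_forall fun y => ?_)).gradient
  simp only [← relVelocity_update]
  exact hA _ hw

theorem IsPairFunction.poisson_kinetic {gradF : E3 → E3 → E3} (hA : IsPairFunction m i j A F)
    (hF : ∀ x v, x ≠ 0 → HasGradientAt (F · v) (gradF x v) x)
    (hF' : ∀ x v, ⟪gradF x v, v⟫ = F' x v) :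
    IsPairFunction m i j (poisson A (kinetic m)) F' := by
  intro w hw
  simp only [poisson, hA.gradPos_eq hw (hF _ _ hw), gradPos_kinetic, gradMom_kinetic,
    inner_zero_right, sub_zero, real_inner_smul_left, sum_pairSign_mul]
  rw [← hF', relVelocity, inner_sub_right]

theorem IsPairFunction.poisson_of_separation {U : E3 → ℝ} {gradF gradU : E3}
    (hA : IsPairFunction m i j A F) (hB : IsPairFunction m i j B fun x _ => U x)
    (hw : separation i j w ≠ 0)
    (hF : HasGradientAt (F (separation i j w)) gradF (relVelocity m i j w))
    (hU : HasGradientAt U gradU (separation i j w)) :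
    poisson A B w = -(((m i)⁻¹ + (m j)⁻¹) * ⟪gradF, gradU⟫) := by
  have hij : i ≠ j := by
    rintro rfl
    exact hw (sub_self _)
  have sign_i : pairSign i j i = 1 := by simp [pairSign, hij]
  have sign_j : pairSign i j j = -1 := by simp [pairSign, hij]
  simp only [poisson, hA.gradMom_eq hw hF, hB.gradPos_eq hw hU,
    hB.gradMom_eq hw (hasGradientAt_const _ _), smul_zero, inner_zero_right, zero_sub,
    real_inner_smul_left, mul_assoc, Finset.sum_neg_distrib, sum_pairSign_mul,
    real_inner_smul_right, sign_i, sign_j]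
  ring

end PairFunction

section InverseDistance

variable {N : ℕ}

/-- The potential `-κ / r_ij` with an arbitrary coupling constant `κ`, such as `G m_i m_j` for
Newtonian gravity. -/
def inverseDistancePot (κ : ℝ) (i j : Fin N) (w : Phase N) : ℝ :=
  -κ / ‖w.1 i - w.1 j‖

variable (κ : ℝ) (m : Fin N → ℝ) (i j : Fin N)

theorem isPairFunction_inverseDistancePot :
    IsPairFunction m i j (inverseDistancePot κ i j) fun x _ => -κ * ‖x‖ ^ (-1 : ℤ) := by
  intro w _
  simp only [inverseDistancePot, separation, zpow_neg_one, div_eq_mul_inv]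

theorem hasGradientAt_inverseDistance {x : E3} (hx : x ≠ 0) :
    HasGradientAt (fun y => -κ * ‖y‖ ^ (-1 : ℤ)) ((κ * ‖x‖ ^ (-3 : ℤ)) • x) x := by
  convert hasGradientAt_const_mul (-κ) (hasGradientAt_norm_zpow (-1) hx) using 1
  push_cast
  module

theorem isPairFunction_VT :
    IsPairFunction m i j (poisson (inverseDistancePot κ i j) (kinetic m))
      fun x v => κ * (⟪v, x⟫ * ‖x‖ ^ (-3 : ℤ)) := by
  refine (isPairFunction_inverseDistancePot κ m i j).poisson_kinetic
    (fun x v hx => hasGradientAt_inverseDistance κ hx) fun x v => ?_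
  rw [real_inner_smul_left, real_inner_comm]
  ring

theorem isPairFunction_VTT :
    IsPairFunction m i j (poisson (poisson (inverseDistancePot κ i j) (kinetic m)) (kinetic m))
      fun x v => κ * (‖v‖ ^ 2 * ‖x‖ ^ (-3 : ℤ) - 3 * (⟪v, x⟫ ^ 2 * ‖x‖ ^ (-5 : ℤ))) := by
  refine (isPairFunction_VT κ m i j).poisson_kinetic
    (fun x v hx => hasGradientAt_const_mul κ (hasGradientAt_mul
      (hasGradientAt_inner_right v x) (hasGradientAt_norm_zpow (-3) hx))) fun x v => ?_
  simp only [real_inner_smul_left, inner_add_left, real_inner_comm v x,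
    real_inner_self_eq_norm_sq]
  push_cast
  ring

theorem isPairFunction_VTTT :
    IsPairFunction m i j
      (poisson (poisson (poisson (inverseDistancePot κ i j) (kinetic m)) (kinetic m)) (kinetic m))
      fun x v => κ * (15 * ‖x‖ ^ (-7 : ℤ) * ⟪v, x⟫ ^ 3
        - 9 * ‖x‖ ^ (-5 : ℤ) * (‖v‖ ^ 2 * ⟪v, x⟫)) := by
  refine (isPairFunction_VTT κ m i j).poisson_kinetic
    (fun x v hx => hasGradientAt_const_mul κ (hasGradientAt_sub
      (hasGradientAt_const_mul (‖v‖ ^ 2) (hasGradientAt_norm_zpow (-3) hx))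
      (hasGradientAt_const_mul 3 (hasGradientAt_mul
        (hasGradientAt_pow 2 (hasGradientAt_inner_right v x))
        (hasGradientAt_norm_zpow (-5) hx))))) fun x v => ?_
  simp only [real_inner_smul_left, inner_add_left, inner_sub_left, real_inner_comm v x,
    real_inner_self_eq_norm_sq]
  push_cast
  ring

theorem hasGradientAt_VTTT_relVelocity (x v : E3) :
    HasGradientAt (fun u => κ * (15 * ‖x‖ ^ (-7 : ℤ) * ⟪u, x⟫ ^ 3
        - 9 * ‖x‖ ^ (-5 : ℤ) * (‖u‖ ^ 2 * ⟪u, x⟫)))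
      ((κ * (45 * ‖x‖ ^ (-7 : ℤ) * ⟪v, x⟫ ^ 2 - 9 * ‖x‖ ^ (-5 : ℤ) * ‖v‖ ^ 2)) • x
        - (18 * κ * ‖x‖ ^ (-5 : ℤ) * ⟪v, x⟫) • v) v := by
  have inner_x := hasGradientAt_inner_left x v
  convert hasGradientAt_const_mul κ (hasGradientAt_sub
    (hasGradientAt_const_mul (15 * ‖x‖ ^ (-7 : ℤ)) (hasGradientAt_pow 3 inner_x))
    (hasGradientAt_const_mul (9 * ‖x‖ ^ (-5 : ℤ))
      (hasGradientAt_mul (hasGradientAt_norm_sq v) inner_x))) using 1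
  push_cast
  module

theorem fourth_order_VTTTV_general {w : Phase N} (hmi : m i ≠ 0) (hmj : m j ≠ 0)
    (hw : separation i j w ≠ 0) :
    poisson (poisson (poisson (poisson (inverseDistancePot κ i j) (kinetic m)) (kinetic m))
        (kinetic m)) (inverseDistancePot κ i j) w =
      -9 * (κ ^ 2 * (m i + m j) / (m i * m j) / ‖separation i j w‖ ^ 8) *
        (3 * ⟪relVelocity m i j w, separation i j w⟫ ^ 2
          - ‖separation i j w‖ ^ 2 * ‖relVelocity m i j w‖ ^ 2) := by
  set x := separation i j w
  set v := relVelocity m i j w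
  have hr : ‖x‖ ≠ 0 := norm_ne_zero_iff.mpr hw
  have inner_gradients :
      ⟪(κ * (45 * ‖x‖ ^ (-7 : ℤ) * ⟪v, x⟫ ^ 2 - 9 * ‖x‖ ^ (-5 : ℤ) * ‖v‖ ^ 2)) • x
        - (18 * κ * ‖x‖ ^ (-5 : ℤ) * ⟪v, x⟫) • v, (κ * ‖x‖ ^ (-3 : ℤ)) • x⟫ =
      9 * κ ^ 2 * (3 * ⟪v, x⟫ ^ 2 - ‖x‖ ^ 2 * ‖v‖ ^ 2) / ‖x‖ ^ 8 := by
    simp only [real_inner_smul_left, real_inner_smul_right, inner_sub_left,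
      real_inner_self_eq_norm_sq]
    field
  rw [(isPairFunction_VTTT κ m i j).poisson_of_separation
    (isPairFunction_inverseDistancePot κ m i j) hw (hasGradientAt_VTTT_relVelocity κ x v)
    (hasGradientAt_inverseDistance κ hw), inner_gradients]
  field

end InverseDistance

/-- Fourth-order two-body error term (paper eq. A17b):
`{{{{V_ij,T},T},T},V_ij} = −9 (G² m_i m_j (m_i + m_j) / r_ij⁸)
  (3 (v_ij·x_ij)² − r_ij² v_ij²)`. -/
theorem fourth_order_VTTTV {N : ℕ} (G : ℝ) (hG : 0 < G) (m : Fin N → ℝ)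
    (hm : ∀ i, 0 < m i) (i j : Fin N) (hij : i ≠ j) (w : Phase N)
    (hr : ‖w.1 i - w.1 j‖ ≠ 0) (xij vij : E3)
    (hx : xij = w.1 i - w.1 j)
    (hv : vij = (m i)⁻¹ • w.2 i - (m j)⁻¹ • w.2 j) :
    poisson (poisson (poisson (poisson (pairPot G m i j) (kinetic m))
        (kinetic m)) (kinetic m)) (pairPot G m i j) w =
      -9 * (G ^ 2 * m i * m j * (m i + m j) / ‖xij‖ ^ 8) *
        (3 * ⟪vij, xij⟫ ^ 2 - ‖xij‖ ^ 2 * ‖vij‖ ^ 2) := by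
  subst hx hv
  have hmi := (hm i).ne'
  have hmj := (hm j).ne'
  have coupling : (G * m i * m j) ^ 2 * (m i + m j) / (m i * m j) =
      G ^ 2 * m i * m j * (m i + m j) := by field
  rw [← coupling]
  exact fourth_order_VTTTV_general (G * m i * m j) m i j hmi hmj (norm_ne_zero_iff.mp hr)
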